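/- arXiv:0904.2384 — 2 statements merged into one kernel-verified Lean document; each statement's English description precedes it below -/
import Mathlib

section
/- Let U be an open subset of a complex Banach space E. Then U is polynomially convex (i.e. for every U-bounded set A, the polynomial hull Â_P is U-bounded) if and only if Û_P = U. -/
/-!
Every `U`-bounded set lies in some `U_n` (and `U_n` is itself `U`-bounded), so `Û_P = U` says that
the hulls of `U`-bounded sets lie in `U`. What has to be shown is that this already makes the hull
of a `U`-bounded set `A` itself `U`-bounded.

* The hull is norm bounded, since Hahn-Banach provides norming functionals, which are polynomials.
* Continuous polynomials are stable under translation, so `y ∈ Â_P` implies `y + h ∈ (A + h)̂_P`.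
  If `ball a d ⊆ U` for all `a ∈ A` and `‖h‖ < d / 2`, then `A + h` is again `U`-bounded, whence
  `y + h ∈ U`. Thus `ball y (d / 2) ⊆ U`.

Translation invariance is the binomial expansion of `M (x + h, …, x + h)`, whose terms are
homogeneous in `x`.
-/


open Set Metric

variable {E : Type*} [NormedAddCommGroup E] [NormedSpace ℂ E]

/-- A continuous `n`-homogeneous polynomial: `x ↦ M (x, …, x)` for a continuous `n`-linear map. -/
def IsHomogPoly (n : ℕ) (Q : E → ℂ) : Prop :=
  ∃ M : ContinuousMultilinearMap ℂ (fun _ : Fin n => E) ℂ, ∀ x, Q x = M fun _ => x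

/-- A continuous polynomial: a finite sum of continuous homogeneous polynomials. -/
def IsContPoly (P : E → ℂ) : Prop :=
  ∃ (N : ℕ) (Q : ℕ → E → ℂ), (∀ k, IsHomogPoly k (Q k)) ∧
    ∀ x, P x = ∑ k ∈ Finset.range (N + 1), Q k x

/-- `A` is `U`-bounded: contained in `U`, norm bounded, uniformly away from the boundary. -/
def UBounded (U A : Set E) : Prop :=
  A ⊆ U ∧ Bornology.IsBounded A ∧ ∃ d > 0, ∀ a ∈ A, ball a d ⊆ U

/-- `f` is in `H_b(U)`: analytic on `U` and bounded on every `U`-bounded set. -/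
def MemHb (U : Set E) (f : E → ℂ) : Prop :=
  AnalyticOnNhd ℂ f U ∧ ∀ A : Set E, UBounded U A → ∃ C : ℝ, ∀ x ∈ A, ‖f x‖ ≤ C

/-- Polynomial hull `Â_P` of a set `A`: points where each continuous polynomial is dominated by
its sup over `A` (formulated via upper bounds). -/
def polyHull (A : Set E) : Set E :=
  {x | ∀ P : E → ℂ, IsContPoly P → ∀ C : ℝ, (∀ a ∈ A, ‖P a‖ ≤ C) → ‖P x‖ ≤ C}

/-- The set `U_n = {x ∈ U : ‖x‖ ≤ n, ball x (1/n) ⊆ U}`. -/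
def UNat (U : Set E) (n : ℕ) : Set E :=
  {x | x ∈ U ∧ ‖x‖ ≤ (n : ℝ) ∧ ball x (1 / (n : ℝ)) ⊆ U}

/-- `Û_P := ⋃ n, (U_n)̂_P`. -/
def UhatP (U : Set E) : Set E := ⋃ n : ℕ, polyHull (UNat U n)

/-- A continuous character of `H_b(U)`. -/
def IsHbChar (U : Set E) (φ : (E → ℂ) → ℂ) : Prop :=
  φ (fun _ => 1) = 1 ∧
  (∀ f g, MemHb U f → MemHb U g → φ (f + g) = φ f + φ g) ∧
  (∀ (c : ℂ) (f), MemHb U f → φ (c • f) = c * φ f) ∧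
  (∀ f g, MemHb U f → MemHb U g → φ (f * g) = φ f * φ g) ∧
  ∃ B : Set E, UBounded U B ∧
    ∀ f, MemHb U f → ∀ C : ℝ, (∀ x ∈ B, ‖f x‖ ≤ C) → ‖φ f‖ ≤ C

/-- `U` is `H_b(U)`-convex. -/
def HbConvex (U : Set E) : Prop :=
  ∀ A : Set E, UBounded U A →
    UBounded U {x ∈ U | ∀ f, MemHb U f → ∀ C : ℝ, (∀ a ∈ A, ‖f a‖ ≤ C) → ‖f x‖ ≤ C}

/-- Continuous polynomials are dense in `H_b(U)`. -/
def PolysDense (U : Set E) : Prop :=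
  ∀ f, MemHb U f → ∀ A : Set E, UBounded U A → ∀ ε > 0,
    ∃ P : E → ℂ, IsContPoly P ∧ ∀ x ∈ A, ‖f x - P x‖ ≤ ε

theorem IsHomogPoly.zero (n : ℕ) : IsHomogPoly n (fun _ : E => (0 : ℂ)) :=
  ⟨0, fun _ => rfl⟩

theorem IsHomogPoly.add {n : ℕ} {P Q : E → ℂ} (hP : IsHomogPoly n P) (hQ : IsHomogPoly n Q) :
    IsHomogPoly n (fun x => P x + Q x) := by
  obtain ⟨M, hM⟩ := hP
  obtain ⟨L, hL⟩ := hQ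
  exact ⟨M + L, fun x => by simp [hM, hL]⟩

theorem IsHomogPoly.isContPoly {n : ℕ} {P : E → ℂ} (hP : IsHomogPoly n P) : IsContPoly P := by
  refine ⟨n, fun k x => if k = n then P x else 0, fun k => ?_, fun x => ?_⟩
  · by_cases hk : k = n
    · subst hk; simpa using hP
    · simpa [hk] using IsHomogPoly.zero (E := E) k
  · simp

theorem IsContPoly.add {P Q : E → ℂ} (hP : IsContPoly P) (hQ : IsContPoly Q) :
    IsContPoly (fun x => P x + Q x) := by
  obtain ⟨N, p, hp, hPp⟩ := hP
  obtain ⟨K, q, hq, hQq⟩ := hQ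
  -- Components of `p` beyond `N` and of `q` beyond `K` are arbitrary, hence must be cut off.
  refine ⟨N + K, fun k x => (if k < N + 1 then p k x else 0) + (if k < K + 1 then q k x else 0),
    fun k => ?_, fun x => ?_⟩
  · refine IsHomogPoly.add ?_ ?_
    · by_cases h : k < N + 1
      · simpa only [h, if_true] using hp k
      · simpa only [h, if_false] using IsHomogPoly.zero (E := E) k
    · by_cases h : k < K + 1
      · simpa only [h, if_true] using hq k
      · simpa only [h, if_false] using IsHomogPoly.zero (E := E) k
  · have key : ∀ (m : ℕ) (f : ℕ → ℂ), m ≤ N + K →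
        ∑ k ∈ Finset.range (N + K + 1), (if k < m + 1 then f k else 0)
          = ∑ k ∈ Finset.range (m + 1), f k := by
      intro m f hm
      rw [← Finset.sum_filter]
      congr 1
      ext k
      simp only [Finset.mem_filter, Finset.mem_range]
      omega
    rw [Finset.sum_add_distrib, key N (fun k => p k x) (by omega),
      key K (fun k => q k x) (by omega), ← hPp, ← hQq]

theorem IsContPoly.sum {ι : Type*} (s : Finset ι) {P : ι → E → ℂ}
    (hP : ∀ i ∈ s, IsContPoly (P i)) : IsContPoly (fun x => ∑ i ∈ s, P i x) := by
  classical
  induction s using Finset.induction_on with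
  | empty => simpa using (IsHomogPoly.zero (E := E) 0).isContPoly
  | insert a s ha ih =>
    simp only [Finset.sum_insert ha]
    exact (hP a (by simp)).add (ih fun i hi => hP i (by simp [hi]))

/-- The polarized binomial formula: `M (x + h, …, x + h)` is the sum over sets `s` of indices of
the value of `M` with `x` in the slots of `s` and `h` in the others, which is homogeneous of degree
`#s` in `x`. -/
theorem IsHomogPoly.translate {n : ℕ} {P : E → ℂ} (hP : IsHomogPoly n P) (h : E) :
    IsContPoly (fun x => P (x + h)) := by
  classical
  obtain ⟨M, hM⟩ := hP
  have e : (fun x => P (x + h)) =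
      fun x => ∑ s : Finset (Fin n), M (s.piecewise (fun _ => x) (fun _ => h)) := by
    funext x
    rw [hM, ← M.map_add_univ]
    rfl
  rw [e]
  refine IsContPoly.sum _ fun s _ => IsHomogPoly.isContPoly (n := s.card) ⟨M.restr s rfl h, ?_⟩
  intro x
  change _ = M _
  congr 1

theorem IsContPoly.translate {P : E → ℂ} (hP : IsContPoly P) (h : E) :
    IsContPoly (fun x => P (x + h)) := by
  obtain ⟨N, Q, hQ, hPQ⟩ := hP
  simp only [hPQ]
  exact IsContPoly.sum _ fun k _ => (hQ k).translate h

theorem isContPoly_clm (g : E →L[ℂ] ℂ) : IsContPoly (fun x => g x) :=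
  IsHomogPoly.isContPoly (n := 1)
    ⟨ContinuousMultilinearMap.ofSubsingleton ℂ E ℂ (0 : Fin 1) g, fun _ => rfl⟩

theorem subset_polyHull (A : Set E) : A ⊆ polyHull A :=
  fun x hx _ _ _ hC => hC x hx

theorem polyHull_mono {A B : Set E} (h : A ⊆ B) : polyHull A ⊆ polyHull B :=
  fun _ hx P hP C hC => hx P hP C fun a ha => hC a (h ha)

theorem add_mem_polyHull {A : Set E} {y : E} (hy : y ∈ polyHull A) (h : E) :
    y + h ∈ polyHull ((fun a => a + h) '' A) :=
  fun _ hP C hC => hy _ (hP.translate h) C fun a ha => hC _ ⟨a, ha, rfl⟩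

theorem isBounded_polyHull {A : Set E} (hA : Bornology.IsBounded A) :
    Bornology.IsBounded (polyHull A) := by
  obtain ⟨R, hR⟩ := hA.exists_norm_le
  refine isBounded_iff_forall_norm_le.2 ⟨R, fun y hy => ?_⟩
  obtain ⟨g, hg, hgy⟩ := exists_dual_vector'' ℂ y
  have := hy _ (isContPoly_clm g) R fun a ha =>
    ((g.le_of_opNorm_le hg a).trans (by simp)).trans (hR a ha)
  simpa [hgy] using this

theorem UBounded.singleton {E : Type*} [NormedAddCommGroup E] {U : Set E} (hU : IsOpen U) {x : E} (hx : x ∈ U) :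
    UBounded U {x} := by
  obtain ⟨d, hd, hdU⟩ := Metric.isOpen_iff.1 hU x hx
  exact ⟨by simpa using hx, Bornology.isBounded_singleton, d, hd, by simpa using hdU⟩

/-- Openness of `U` matters only for `n = 0`: there `1 / n = 0`, and `U_0 ⊆ {0}` with no condition
on balls. -/
theorem uBounded_UNat {U : Set E} (hU : IsOpen U) (n : ℕ) : UBounded U (UNat U n) := by
  rcases Nat.eq_zero_or_pos n with rfl | hn
  · by_cases h0 : (0 : E) ∈ U
    · have hsub : UNat U 0 ⊆ {0} := fun x hx => by simpa using hx.2.1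
      obtain ⟨-, hb, d, hd, hdU⟩ := UBounded.singleton hU h0
      exact ⟨fun x hx => hx.1, hb.subset hsub, d, hd, fun a ha => hdU a (hsub ha)⟩
    · refine ⟨fun x hx => hx.1, ?_, 1, one_pos, fun x hx => ?_⟩
      · exact isBounded_iff_forall_norm_le.2 ⟨_, fun x hx => hx.2.1⟩
      · have hx0 : x = 0 := by simpa using hx.2.1
        exact absurd (hx0 ▸ hx.1) h0
  · exact ⟨fun x hx => hx.1, isBounded_iff_forall_norm_le.2 ⟨_, fun x hx => hx.2.1⟩,
      1 / (n : ℝ), by positivity, fun x hx => hx.2.2⟩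

theorem UBounded.exists_subset_UNat {U A : Set E} (hA : UBounded U A) : ∃ n, A ⊆ UNat U n := by
  obtain ⟨hAU, hb, d, hd, hdU⟩ := hA
  obtain ⟨R, hR⟩ := hb.exists_norm_le
  obtain ⟨n, hn⟩ := exists_nat_ge (max R (1 / d))
  refine ⟨n, fun a ha => ⟨hAU ha, (hR a ha).trans ((le_max_left _ _).trans hn), ?_⟩⟩
  refine (ball_subset_ball ?_).trans (hdU a ha)
  have hdn : 1 / d ≤ n := (le_max_right _ _).trans hn
  simpa using one_div_le_one_div_of_le (by positivity) hdn

theorem UBounded.polyHull_subset_UhatP {U A : Set E} (hA : UBounded U A) :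
    polyHull A ⊆ UhatP U := by
  obtain ⟨n, hn⟩ := hA.exists_subset_UNat
  exact (polyHull_mono hn).trans (subset_iUnion (fun n => polyHull (UNat U n)) n)

theorem UBounded.translate {E : Type*} [NormedAddCommGroup E] {U A : Set E} {d : ℝ} (hd : 0 < d) (hb : Bornology.IsBounded A)
    (hdU : ∀ a ∈ A, ball a d ⊆ U) {h : E} (hh : ‖h‖ < d / 2) :
    UBounded U ((fun a => a + h) '' A) := by
  have hball : ∀ a ∈ A, ball (a + h) (d / 2) ⊆ U := fun a ha =>
    (ball_subset_ball' (by simp; linarith)).trans (hdU a ha)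
  obtain ⟨R, hR⟩ := hb.exists_norm_le
  refine ⟨?_, isBounded_iff_forall_norm_le.2 ⟨R + d / 2, ?_⟩, d / 2, by positivity, ?_⟩
  · rintro _ ⟨a, ha, rfl⟩
    exact hball a ha (mem_ball_self (by positivity))
  · rintro _ ⟨a, ha, rfl⟩
    exact (norm_add_le a h).trans (add_le_add (hR a ha) hh.le)
  · rintro _ ⟨a, ha, rfl⟩
    exact hball a ha

/-- `U` is polynomially convex (the polynomial hull of every `U`-bounded set is
`U`-bounded) if and only if `Û_P = U`. -/
theorem stmt_3 {E : Type*} [NormedAddCommGroup E] [NormedSpace ℂ E] [CompleteSpace E]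
    (U : Set E) (hU : IsOpen U) :
    (∀ A : Set E, UBounded U A → UBounded U (polyHull A)) ↔ UhatP U = U := by
  constructor
  · intro H
    refine Subset.antisymm (iUnion_subset fun n => (H _ (uBounded_UNat hU n)).1) fun x hx => ?_
    exact (UBounded.singleton hU hx).polyHull_subset_UhatP (subset_polyHull _ rfl)
  · intro H A hA
    have hsub : polyHull A ⊆ U := hA.polyHull_subset_UhatP.trans H.subset
    obtain ⟨-, hb, d, hd, hdU⟩ := hA
    refine ⟨hsub, isBounded_polyHull hb, d / 2, by positivity, fun y hy z hz => ?_⟩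
    have hh : ‖z - y‖ < d / 2 := by rwa [mem_ball_iff_norm] at hz
    have := (UBounded.translate hd hb hdU hh).polyHull_subset_UhatP (add_mem_polyHull hy (z - y))
    rwa [H, add_sub_cancel] at this
end

section
/- Let U be an open subset of a complex Banach space E. Then the set of evaluation points for H_b(U), namely ∨U := {x ∈ E : there exists a continuous character φ of H_b(U) with φ(f|_U) = f(x) for every f ∈ H_b(E)}, is an open subset of E. -/
/-!
Let `φ` be a continuous character of `H_b(U)`, dominated by the supremum over a `U`-bounded set `B`
with `ball b d ⊆ U` for `b ∈ B`, which evaluates entire functions at `x`. For `‖v‖ < d / 4` the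
character can be translated by `v` along Taylor series:

  `ψ f = ∑ n, φ (z ↦ (1 / n!) (d/dt)ⁿ f (z + t v) at t = 0)`.

Each Taylor coefficient belongs to `H_b(U)` (`MemHb.tcoef`), and Cauchy's estimate on circles of
radius `2` bounds its `n`-th instance on `B` by `2⁻ⁿ` times the supremum of `f` over the
`d / 2`-thickening of `B` (`norm_tcoef_le`), so the series converges absolutely. The Leibniz rule
(`tcoef_mul`) and the Cauchy product make `ψ` multiplicative. Summing the geometric series gives
`‖ψ f‖ ≤ 2 C` whenever `‖f‖ ≤ C` on the thickening; applying this to the powers of `f` removes the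
factor `2` (`le_of_forall_pow_le_two_mul`). For entire `f` the sum is the Taylor expansion of
`f (x + v)`. Hence `ball x (d / 4)` consists of evaluation points.
-/


open Set Metric

variable {E : Type*} [NormedAddCommGroup E] [NormedSpace ℂ E]

/-! ### Taylor coefficients along a direction -/

/-- The `n`-th Taylor coefficient at `t = 0` of the slice `t ↦ f (z + t v)`, as a function
of `z`. -/
noncomputable def tcoef (v : E) (n : ℕ) (f : E → ℂ) (z : E) : ℂ :=
  (n.factorial : ℂ)⁻¹ * iteratedDeriv n (fun t : ℂ => f (z + t • v)) 0

lemma analyticAt_slice {f : E → ℂ} {z v : E} {t : ℂ} (h : AnalyticAt ℂ f (z + t • v)) :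
    AnalyticAt ℂ (fun s : ℂ => f (z + s • v)) t :=
  AnalyticAt.fun_comp (g := f) h (by fun_prop)

lemma tcoef_add (v : E) (n : ℕ) {f g : E → ℂ} {z : E} (hf : AnalyticAt ℂ f z)
    (hg : AnalyticAt ℂ g z) : tcoef v n (f + g) z = tcoef v n f z + tcoef v n g z := by
  have hf' : AnalyticAt ℂ (fun s : ℂ => f (z + s • v)) 0 := analyticAt_slice (by simpa using hf)
  have hg' : AnalyticAt ℂ (fun s : ℂ => g (z + s • v)) 0 := analyticAt_slice (by simpa using hg)
  simp only [tcoef, Pi.add_apply]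
  rw [iteratedDeriv_fun_add hf'.contDiffAt hg'.contDiffAt, mul_add]

lemma tcoef_smul (v : E) (n : ℕ) (c : ℂ) (f : E → ℂ) : tcoef v n (c • f) = c • tcoef v n f := by
  ext z
  have := iteratedDeriv_const_smul_field (n := n) (x := (0 : ℂ)) c (fun t : ℂ => f (z + t • v))
  simp only [tcoef, Pi.smul_apply, smul_eq_mul]
  rw [mul_left_comm, ← smul_eq_mul c, ← this]
  rfl

/-- The Leibniz rule, in the form of a Cauchy product of Taylor coefficients. -/
lemma tcoef_mul (v : E) (n : ℕ) {f g : E → ℂ} {z : E} (hf : AnalyticAt ℂ f z)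
    (hg : AnalyticAt ℂ g z) :
    tcoef v n (f * g) z = ∑ k ∈ Finset.range (n + 1), tcoef v k f z * tcoef v (n - k) g z := by
  have hf' : AnalyticAt ℂ (fun s : ℂ => f (z + s • v)) 0 := analyticAt_slice (by simpa using hf)
  have hg' : AnalyticAt ℂ (fun s : ℂ => g (z + s • v)) 0 := analyticAt_slice (by simpa using hg)
  simp only [tcoef, Pi.mul_apply]
  rw [iteratedDeriv_fun_mul hf'.contDiffAt hg'.contDiffAt, Finset.mul_sum]
  refine Finset.sum_congr rfl fun k hk => ?_
  have hk' : k ≤ n := Nat.lt_succ_iff.mp (Finset.mem_range.mp hk)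
  have h1 : (n.factorial : ℂ) ≠ 0 := by exact_mod_cast n.factorial_ne_zero
  have h2 : (k.factorial : ℂ) ≠ 0 := by exact_mod_cast k.factorial_ne_zero
  have h3 : ((n - k).factorial : ℂ) ≠ 0 := by exact_mod_cast (n - k).factorial_ne_zero
  rw [Nat.cast_choose ℂ hk']
  field_simp

lemma analyticOnNhd_fderiv_apply (v : E) {U : Set E} {f : E → ℂ} (hf : AnalyticOnNhd ℂ f U) :
    AnalyticOnNhd ℂ (fun w => fderiv ℂ f w v) U := fun w hw =>
  ((ContinuousLinearMap.apply ℂ ℂ v).analyticAt _).fun_comp (hf.fderiv w hw)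

/-- The derivatives of a slice at `0` are iterated directional derivatives. -/
lemma iteratedDeriv_slice (v : E) {U : Set E} (hU : IsOpen U) (n : ℕ) :
    ∀ {f : E → ℂ}, AnalyticOnNhd ℂ f U → ∀ z ∈ U,
      iteratedDeriv n (fun t : ℂ => f (z + t • v)) 0 =
        (fun (g : E → ℂ) w => fderiv ℂ g w v)^[n] f z := by
  induction n with
  | zero => intro f _ z _; simp
  | succ n ih =>
    intro f hf z hz
    rw [iteratedDeriv_succ', Function.iterate_succ_apply,
      ← ih (f := fun w => fderiv ℂ f w v) (analyticOnNhd_fderiv_apply v hf) z hz]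
    apply Filter.EventuallyEq.iteratedDeriv_eq
    have hc : Continuous fun t : ℂ => z + t • v := by fun_prop
    have : ∀ᶠ t in nhds (0 : ℂ), z + t • v ∈ U :=
      hc.continuousAt.eventually_mem (hU.mem_nhds (by simpa using hz))
    filter_upwards [this] with t ht
    have hd : HasDerivAt (fun s : ℂ => z + s • v) v t := by
      simpa using ((hasDerivAt_id t).smul_const v).const_add z
    exact ((hf _ ht).differentiableAt.hasFDerivAt.comp_hasDerivAt t hd).deriv

lemma analyticOnNhd_tcoef (v : E) {U : Set E} (hU : IsOpen U) (n : ℕ) {f : E → ℂ}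
    (hf : AnalyticOnNhd ℂ f U) : AnalyticOnNhd ℂ (tcoef v n f) U := by
  have key : ∀ m : ℕ, AnalyticOnNhd ℂ ((fun (g : E → ℂ) w => fderiv ℂ g w v)^[m] f) U := by
    intro m
    induction m with
    | zero => simpa using hf
    | succ m ih =>
      rw [Function.iterate_succ_apply']
      exact analyticOnNhd_fderiv_apply v ih
  refine AnalyticOnNhd.congr hU
    (f := fun z => (n.factorial : ℂ)⁻¹ * (fun (g : E → ℂ) w => fderiv ℂ g w v)^[n] f z)
    (fun w hw => analyticAt_const.mul (key n w hw)) fun z hz => ?_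
  simp only [tcoef]
  rw [iteratedDeriv_slice v hU n hf z hz]

/-- Cauchy's estimate for the Taylor coefficients of a slice. -/
lemma norm_tcoef_le {v z : E} {f : E → ℂ} {r R C : ℝ} (n : ℕ) (hR : 0 < R) (hRr : R * ‖v‖ < r)
    (hf : AnalyticOnNhd ℂ f (ball z r)) (hC : ∀ y ∈ ball z r, ‖f y‖ ≤ C) :
    ‖tcoef v n f z‖ ≤ C / R ^ n := by
  have hmem : ∀ t ∈ closedBall (0 : ℂ) R, z + t • v ∈ ball z r := by
    intro t ht
    rw [mem_closedBall_zero_iff] at ht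
    rw [mem_ball_iff_norm, add_sub_cancel_left, norm_smul]
    exact (mul_le_mul_of_nonneg_right ht (norm_nonneg v)).trans_lt hRr
  have hd : DifferentiableOn ℂ (fun t : ℂ => f (z + t • v)) (closedBall 0 R) := fun t ht =>
    (analyticAt_slice (hf _ (hmem t ht))).differentiableAt.differentiableWithinAt
  have h := Complex.norm_iteratedDeriv_le_of_forall_mem_sphere_norm_le n hR
    (hd.diffContOnCl_ball subset_rfl)
    fun t ht => hC _ (hmem t (sphere_subset_closedBall ht))
  have hn : (0 : ℝ) < n.factorial := by exact_mod_cast n.factorial_pos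
  rw [tcoef, norm_mul, norm_inv, Complex.norm_natCast, inv_mul_le_iff₀ hn, ← mul_div_assoc]
  exact h

/-! ### Closure properties of `H_b(U)` -/

lemma UBounded.thickening {U A : Set E} {d : ℝ} (hA : Bornology.IsBounded A) (hd : 0 < d)
    (h : ∀ a ∈ A, ball a d ⊆ U) : UBounded U (thickening (d / 2) A) := by
  refine ⟨fun y hy => ?_, hA.thickening, d / 2, by positivity, fun y hy w hw => ?_⟩
  all_goals
    obtain ⟨a, ha, hya⟩ := mem_thickening_iff.mp hy
    apply h a ha
  · rw [mem_ball]; linarith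
  · rw [mem_ball] at hw ⊢
    linarith [dist_triangle w y a]

lemma MemHb.tcoef {U : Set E} (hU : IsOpen U) (v : E) (n : ℕ) {f : E → ℂ} (hf : MemHb U f) :
    MemHb U (tcoef v n f) := by
  refine ⟨analyticOnNhd_tcoef v hU n hf.1, fun A hA => ?_⟩
  obtain ⟨hAU, hAb, d, hd, hball⟩ := hA
  have hth := UBounded.thickening hAb hd hball
  obtain ⟨C, hC⟩ := hf.2 _ hth
  -- A radius small enough for the discs `z + t v` to stay in the thickening, also when `v = 0`.
  have hv : 0 < ‖v‖ + 1 := by positivity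
  have hR : 0 < d / 2 / (‖v‖ + 1) := by positivity
  have hlt : d / 2 / (‖v‖ + 1) * ‖v‖ < d / 2 := by
    rw [div_mul_eq_mul_div, div_lt_iff₀ hv]; nlinarith
  have hsub : ∀ a ∈ A, ball a (d / 2) ⊆ Metric.thickening (d / 2) A := fun a ha y hy =>
    mem_thickening_iff.mpr ⟨a, ha, hy⟩
  exact ⟨_, fun a ha => norm_tcoef_le n hR hlt (hf.1.mono ((hsub a ha).trans hth.1))
    fun y hy => hC y (hsub a ha hy)⟩

lemma MemHb.add {U : Set E} {f g : E → ℂ} (hf : MemHb U f) (hg : MemHb U g) :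
    MemHb U (f + g) := by
  refine ⟨hf.1.add hg.1, fun A hA => ?_⟩
  obtain ⟨C, hC⟩ := hf.2 A hA
  obtain ⟨D, hD⟩ := hg.2 A hA
  exact ⟨C + D, fun x hx => (norm_add_le _ _).trans (add_le_add (hC x hx) (hD x hx))⟩

lemma MemHb.mul {U : Set E} {f g : E → ℂ} (hf : MemHb U f) (hg : MemHb U g) :
    MemHb U (f * g) := by
  refine ⟨hf.1.mul hg.1, fun A hA => ?_⟩
  obtain ⟨C, hC⟩ := hf.2 A hA
  obtain ⟨D, hD⟩ := hg.2 A hA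
  refine ⟨C * D, fun x hx => ?_⟩
  rw [Pi.mul_apply, norm_mul]
  exact mul_le_mul (hC x hx) (hD x hx) (norm_nonneg _) ((norm_nonneg _).trans (hC x hx))

lemma memHb_const (U : Set E) (c : ℂ) : MemHb U (fun _ => c) :=
  ⟨analyticOnNhd_const, fun _ _ => ⟨‖c‖, fun _ _ => le_rfl⟩⟩

lemma MemHb.smul {U : Set E} {f : E → ℂ} (c : ℂ) (hf : MemHb U f) : MemHb U (c • f) :=
  (memHb_const U c).mul hf

lemma MemHb.pow {U : Set E} {f : E → ℂ} (hf : MemHb U f) (k : ℕ) : MemHb U (f ^ k) := by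
  induction k with
  | zero => rw [pow_zero]; exact memHb_const U 1
  | succ k ih => rw [pow_succ]; exact ih.mul hf

lemma MemHb.sum {U : Set E} {F : ℕ → E → ℂ} (hF : ∀ k, MemHb U (F k)) (s : Finset ℕ) :
    MemHb U (∑ k ∈ s, F k) := by
  induction s using Finset.induction_on with
  | empty => rw [Finset.sum_empty]; exact memHb_const U 0
  | insert a s ha ih => rw [Finset.sum_insert ha]; exact (hF a).add ih

lemma MemHb.of_univ {U : Set E} {f : E → ℂ} (hf : MemHb univ f) : MemHb U f :=
  ⟨hf.1.mono (subset_univ U), fun A hA => hf.2 A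
    ⟨subset_univ A, hA.2.1, 1, one_pos, fun _ _ => subset_univ _⟩⟩

/-! ### Translating characters -/

/-- Functions in `H_b(U)` are encoded by functions on all of `E`; a continuous character does not
see their values outside `U`. -/
lemma IsHbChar.congr {U : Set E} {φ : (E → ℂ) → ℂ} (hφ : IsHbChar U φ) {f g : E → ℂ}
    (hf : MemHb U f) (hg : MemHb U g) (h : EqOn f g U) : φ f = φ g := by
  obtain ⟨-, hadd, hsmul, -, B, hB, hb⟩ := hφ
  have h0 := hb _ (hf.add (hg.smul (-1))) 0 fun x hx => by simp [h (hB.1 hx)]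
  rw [hadd _ _ hf (hg.smul _), hsmul _ _ hg] at h0
  have h1 := norm_le_zero_iff.mp h0
  linear_combination h1

lemma IsHbChar.map_sum {U : Set E} {φ : (E → ℂ) → ℂ} (hφ : IsHbChar U φ) {F : ℕ → E → ℂ}
    (hF : ∀ k, MemHb U (F k)) (s : Finset ℕ) : φ (∑ k ∈ s, F k) = ∑ k ∈ s, φ (F k) := by
  induction s using Finset.induction_on with
  | empty =>
    have := hφ.2.2.1 0 0 (memHb_const U 0)
    simpa using this
  | insert a s ha ih =>
    rw [Finset.sum_insert ha, Finset.sum_insert ha, hφ.2.1 _ _ (hF a) (MemHb.sum hF s), ih]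

lemma le_of_forall_pow_le_two_mul {a C : ℝ} (hC : 0 ≤ C) (h : ∀ k : ℕ, a ^ k ≤ 2 * C ^ k) :
    a ≤ C := by
  by_contra! hlt
  rcases hC.eq_or_lt with rfl | hpos
  · have := h 1
    simp at this
    linarith
  · obtain ⟨k, hk⟩ := pow_unbounded_of_one_lt 2 ((one_lt_div hpos).mpr hlt)
    rw [div_pow, lt_div_iff₀ (by positivity)] at hk
    linarith [h k]

/-- The translate of a continuous character by a small vector, along Taylor series, is again a
continuous character. -/
lemma IsHbChar.translate {U : Set E} (hU : IsOpen U) {φ : (E → ℂ) → ℂ} (hφ : IsHbChar U φ)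
    {B : Set E} {d : ℝ} (hBb : Bornology.IsBounded B) (hd : 0 < d)
    (hball : ∀ b ∈ B, ball b d ⊆ U)
    (hb : ∀ f, MemHb U f → ∀ C : ℝ, (∀ x ∈ B, ‖f x‖ ≤ C) → ‖φ f‖ ≤ C)
    {v : E} (hv : ‖v‖ < d / 4) : IsHbChar U fun f => ∑' n, φ (tcoef v n f) := by
  have hcongr := fun {f g : E → ℂ} => hφ.congr (f := f) (g := g)
  obtain ⟨hone, hadd, hsmul, hmul, -⟩ := id hφ
  have hth := UBounded.thickening hBb hd hball
  have hsub : ∀ b ∈ B, ball b (d / 2) ⊆ thickening (d / 2) B := fun b hb' y hy =>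
    mem_thickening_iff.mpr ⟨b, hb', hy⟩
  have hest : ∀ f, MemHb U f → ∀ C : ℝ, (∀ x ∈ thickening (d / 2) B, ‖f x‖ ≤ C) →
      ∀ n, ‖φ (tcoef v n f)‖ ≤ C / 2 ^ n := fun f hf C hC n =>
    hb _ (hf.tcoef hU v n) _ fun b hb' => norm_tcoef_le n two_pos (by linarith)
      (hf.1.mono ((hsub b hb').trans hth.1)) fun y hy => hC y (hsub b hb' hy)
  have hgeom : ∀ C : ℝ, HasSum (fun n : ℕ => C / 2 ^ n) (2 * C) := fun C => by
    have := hasSum_geometric_two.mul_left C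
    simpa [div_eq_mul_inv, mul_comm] using this
  have hsum : ∀ f, MemHb U f → Summable fun n => ‖φ (tcoef v n f)‖ := fun f hf => by
    obtain ⟨C, hC⟩ := hf.2 _ hth
    exact Summable.of_nonneg_of_le (fun _ => norm_nonneg _) (hest f hf C hC) (hgeom C).summable
  have hle : ∀ f, MemHb U f → ∀ C : ℝ, (∀ x ∈ thickening (d / 2) B, ‖f x‖ ≤ C) →
      ‖∑' n, φ (tcoef v n f)‖ ≤ 2 * C := fun f hf C hC =>
    tsum_of_norm_bounded (hgeom C) (hest f hf C hC)
  have hone' : ∑' n, φ (tcoef v n fun _ => 1) = 1 := by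
    rw [tsum_eq_single 0]
    · have : tcoef v 0 (fun _ : E => (1 : ℂ)) = fun _ => 1 := by
        ext z
        simp [tcoef]
      rw [this, hone]
    · intro n hn
      have : tcoef v n (fun _ : E => (1 : ℂ)) = (0 : ℂ) • fun _ => 1 := by
        ext z
        simp [tcoef, iteratedDeriv_const, hn]
      rw [this, hsmul _ _ (memHb_const U 1), zero_mul]
  have hmul' : ∀ f g, MemHb U f → MemHb U g → ∑' n, φ (tcoef v n (f * g)) =
      (∑' n, φ (tcoef v n f)) * ∑' n, φ (tcoef v n g) := by
    intro f g hf hg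
    rw [tsum_mul_tsum_eq_tsum_sum_range_of_summable_norm (hsum f hf) (hsum g hg)]
    refine tsum_congr fun n => ?_
    have hmem : ∀ k, MemHb U (tcoef v k f * tcoef v (n - k) g) := fun k =>
      (hf.tcoef hU v k).mul (hg.tcoef hU v (n - k))
    rw [hcongr ((hf.mul hg).tcoef hU v n) (MemHb.sum hmem (Finset.range (n + 1)))
      fun z hz => by simp [tcoef_mul v n (hf.1 z hz) (hg.1 z hz)], hφ.map_sum hmem]
    exact Finset.sum_congr rfl fun k _ => hmul _ _ (hf.tcoef hU v k) (hg.tcoef hU v (n - k))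
  refine ⟨hone', fun f g hf hg => ?_, fun c f hf => ?_, hmul', _, hth, fun f hf C hC => ?_⟩
  · rw [← (hsum f hf).of_norm.tsum_add (hsum g hg).of_norm]
    refine tsum_congr fun n => ?_
    rw [← hadd _ _ (hf.tcoef hU v n) (hg.tcoef hU v n)]
    exact hcongr ((hf.add hg).tcoef hU v n) ((hf.tcoef hU v n).add (hg.tcoef hU v n))
      fun z hz => tcoef_add v n (hf.1 z hz) (hg.1 z hz)
  · rw [← tsum_mul_left]
    refine tsum_congr fun n => ?_
    rw [tcoef_smul, hsmul _ _ (hf.tcoef hU v n)]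
  · -- `B` is nonempty, as otherwise `φ 1` would be bounded by `0`; hence `0 ≤ C`.
    obtain ⟨b, hbB⟩ : B.Nonempty := by
      by_contra hne
      rw [not_nonempty_iff_eq_empty] at hne
      have := hb _ (memHb_const U 1) 0 (by simp [hne])
      simp [hone] at this
      linarith
    have hC0 : 0 ≤ C := (norm_nonneg _).trans (hC b (hsub b hbB (mem_ball_self (by positivity))))
    refine le_of_forall_pow_le_two_mul hC0 fun k => ?_
    have hpow : ∑' n, φ (tcoef v n (f ^ k)) = (∑' n, φ (tcoef v n f)) ^ k := by
      induction k with
      | zero => rw [pow_zero, pow_zero]; exact hone'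
      | succ k ih => rw [pow_succ, hmul' _ _ (hf.pow k) hf, ih, pow_succ]
    rw [← norm_pow, ← hpow]
    refine hle _ (hf.pow k) _ fun x hx => ?_
    rw [Pi.pow_apply, norm_pow]
    exact pow_le_pow_left₀ (norm_nonneg _) (hC x hx) k

/-- Taylor expansion of an entire function along a line. -/
lemma tsum_tcoef_of_entire {f : E → ℂ} (hf : AnalyticOnNhd ℂ f univ) (x v : E) :
    ∑' n, tcoef v n f x = f (x + v) := by
  have hd : Differentiable ℂ fun t : ℂ => f (x + t • v) := fun t =>
    (analyticAt_slice (hf _ (mem_univ _))).differentiableAt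
  have := Complex.taylorSeries_eq_of_entire hd 0 1
  simpa [tcoef] using this

/-- The set `∨U` of evaluation points for `H_b(U)` is open in `E`. -/
theorem stmt_4 {E : Type*} [NormedAddCommGroup E] [NormedSpace ℂ E] [CompleteSpace E]
    (U : Set E) (hU : IsOpen U) :
    IsOpen {x : E | ∃ φ : (E → ℂ) → ℂ, IsHbChar U φ ∧
      ∀ f : E → ℂ, MemHb Set.univ f → φ f = f x} := by
  rw [Metric.isOpen_iff]
  rintro x ⟨φ, hφ, hx⟩
  obtain ⟨B, ⟨-, hBb, d, hd, hball⟩, hb⟩ := hφ.2.2.2.2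
  refine ⟨d / 4, by positivity, fun y hy => ?_⟩
  rw [mem_ball_iff_norm] at hy
  refine ⟨_, hφ.translate hU hBb hd hball hb hy, fun f hf => ?_⟩
  have : ∀ n, φ (tcoef (y - x) n f) = tcoef (y - x) n f x := fun n =>
    hx _ (hf.tcoef isOpen_univ (y - x) n)
  simp only [this]
  rw [tsum_tcoef_of_entire hf.1, add_sub_cancel]
end
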